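/- The subalgebra of the down-up algebra A(α,β,φ) generated by t₁,…,tₙ is isomorphic to the polynomial ring K[t₁,…,tₙ], and every nonzero polynomial f(t₁,…,tₙ) is a regular central element of A(α,β,φ). -/

import Mathlib

open MvPolynomial

namespace DownUp

inductive Gen | u | d

variable {K : Type} [Field K] {n : ℕ}

/-- Free algebra over the polynomial base ring on generators u, d. -/
abbrev F (K : Type) [Field K] (n : ℕ) := FreeAlgebra (MvPolynomial (Fin n) K) Gen

noncomputable def uF : F K n := FreeAlgebra.ι _ Gen.u
noncomputable def dF : F K n := FreeAlgebra.ι _ Gen.d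

/-- The defining relations of the down-up algebra over K[t₁,…,tₙ]. -/
inductive Rel (α β : K) (φ : MvPolynomial (Fin n) K) : F K n → F K n → Prop
  | ddu : Rel α β φ (dF * dF * uF)
      (α • (dF * uF * dF) + β • (uF * dF * dF) + algebraMap _ _ φ * dF)
  | duu : Rel α β φ (dF * uF * uF)
      (α • (uF * dF * uF) + β • (uF * uF * dF) + uF * algebraMap _ _ φ)

/-- The down-up algebra A(α,β,φ) over K[t₁,…,tₙ]. -/
abbrev A (α β : K) (φ : MvPolynomial (Fin n) K) := RingQuot (Rel α β φ)

noncomputable def U (α β : K) (φ : MvPolynomial (Fin n) K) : A α β φ :=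
  RingQuot.mkAlgHom K _ uF
noncomputable def D (α β : K) (φ : MvPolynomial (Fin n) K) : A α β φ :=
  RingQuot.mkAlgHom K _ dF

/-- Image of the base polynomial ring in A. -/
noncomputable def T (α β : K) (φ : MvPolynomial (Fin n) K) :
    MvPolynomial (Fin n) K →ₐ[K] A α β φ :=
  (RingQuot.mkAlgHom K (Rel α β φ)).comp (IsScalarTower.toAlgHom K (MvPolynomial (Fin n) K) (F K n))

end DownUp

/-!
Put `x = d * u` and `y = u * d`. The defining relations say exactly that `x` and `y` are shifted by
`σ x = α x + β y + φ`, `σ y = x` when they are moved past `u` or `d`: `d f = σ(f) d` and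
`f u = u σ(f)` for every polynomial `f` in `x` and `y`. Hence the words `uⁱ f(x, y) dᵏ` span the
algebra, and the only ambiguity in writing an element in this way is
`uⁱ y g dᵏ = uⁱ⁺¹ σ(g) dᵏ⁺¹`.

Conversely, dividing the free module on the symbols `uⁱ f dᵏ` by these ambiguities gives a module on
which `u` and `d` act, and applying an element of the algebra to the symbol `1` recovers the
element. So it suffices that this quotient is torsion-free over the base ring: if a scalar `c`
divides `∑ (uⁱ y gᵢₖ dᵏ - uⁱ⁺¹ σ(gᵢₖ) dᵏ⁺¹)`, then comparing coefficients by increasing `i` shows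
that `c` divides every `gᵢₖ`.

The base ring embeds because `u, d ↦ 0` defines an augmentation.
-/

namespace DownUp

lemma C_dvd_of_C_dvd_X_mul {σ R : Type*} [CommSemiring R] {c : R} {j : σ} {g : MvPolynomial σ R}
    (h : C c ∣ X j * g) : C c ∣ g := by
  rw [C_dvd_iff_dvd_coeff] at h ⊢
  intro m
  rw [← coeff_X_mul m j g]
  exact h _

lemma isRegular_algebraMap {R E : Type*} [CommSemiring R] [Semiring E] [Algebra R E]
    [Module.IsTorsionFree R E] {r : R} (hr : IsRegular r) : IsRegular (algebraMap R E r) := by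
  rw [Commute.isRegular_iff (Algebra.commute_algebraMap_left r)]
  intro a b hab
  refine hr.isSMulRegular (M := E) ?_
  simpa only [Algebra.smul_def] using hab

section DownUpPair

variable {R E : Type*} [CommRing R] [Ring E] [Algebra R E]

/-- A pair of elements of an `R`-algebra that satisfies the down-up relations, with all three
parameters taken in `R`. -/
structure IsDownUpPair (α β φ : R) (u d : E) : Prop where
  ddu : d * d * u = α • (d * u * d) + β • (u * d * d) + φ • d
  duu : d * u * u = α • (u * d * u) + β • (u * u * d) + φ • u

/-- The polynomial ring in the weights `x = d * u` (variable `0`) and `y = u * d` (variable `1`). -/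
abbrev WeightRing (R : Type*) [CommRing R] := MvPolynomial (Fin 2) R

/-- The endomorphism `σ` of the weight ring that describes how weights move past `u` and `d`. -/
noncomputable def shift (α β φ : R) : WeightRing R →ₐ[R] WeightRing R :=
  aeval ![α • X 0 + β • X 1 + C φ, X 0]

@[simp]
lemma shift_X_zero (α β φ : R) : shift α β φ (X 0) = α • X 0 + β • X 1 + C φ := by
  simp [shift]

@[simp]
lemma shift_X_one (α β φ : R) : shift α β φ (X 1) = X 0 := by
  simp [shift]

namespace IsDownUpPair

variable {α β φ : R} {u d : E}

lemma commute_mul_mul (h : IsDownUpPair α β φ u d) : Commute (d * u) (u * d) :=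
  calc d * u * (u * d) = d * u * u * d := by noncomm_ring
    _ = u * (d * d * u) := by
      rw [h.duu, h.ddu]
      simp only [add_mul, mul_add, smul_mul_assoc, mul_smul_comm, mul_assoc]
    _ = u * d * (d * u) := by noncomm_ring

open scoped IsMulCommutative in
/-- Evaluation of weights at `x = d * u` and `y = u * d`. As these commute, it factors through the
commutative subalgebra that they generate. -/
noncomputable def evalWeight (h : IsDownUpPair α β φ u d) : WeightRing R →ₐ[R] E :=
  haveI : IsMulCommutative (Algebra.adjoin R (Set.range ![d * u, u * d])) :=
    Algebra.isMulCommutative_adjoin R (by simp [h.commute_mul_mul.eq])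
  (Algebra.adjoin R (Set.range ![d * u, u * d])).val.comp
    (aeval (S₁ := Algebra.adjoin R (Set.range ![d * u, u * d]))
      fun j => ⟨![d * u, u * d] j, Algebra.subset_adjoin (Set.mem_range_self j)⟩)

@[simp]
lemma evalWeight_X_zero (h : IsDownUpPair α β φ u d) : h.evalWeight (X 0) = d * u := by
  simp [evalWeight]

@[simp]
lemma evalWeight_X_one (h : IsDownUpPair α β φ u d) : h.evalWeight (X 1) = u * d := by
  simp [evalWeight]

lemma evalWeight_shift_X_zero (h : IsDownUpPair α β φ u d) :
    h.evalWeight (shift α β φ (X 0)) = α • (d * u) + β • (u * d) + algebraMap R E φ := by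
  simp

lemma mul_evalWeight (h : IsDownUpPair α β φ u d) (g : WeightRing R) :
    d * h.evalWeight g = h.evalWeight (shift α β φ g) * d := by
  induction g using MvPolynomial.induction_on with
  | C r => rw [← algebraMap_eq, AlgHom.commutes, AlgHom.commutes, AlgHom.commutes,
      Algebra.commutes]
  | add p q hp hq => simp only [map_add, mul_add, add_mul, hp, hq]
  | mul_X p j hp =>
    have hX : ∀ j, d * h.evalWeight (X j) = h.evalWeight (shift α β φ (X j)) * d := by
      refine Fin.forall_fin_two.2 ⟨?_, ?_⟩
      · rw [evalWeight_shift_X_zero, evalWeight_X_zero, ← mul_assoc, h.ddu]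
        simp only [add_mul, smul_mul_assoc, Algebra.smul_def φ]
      · simp [mul_assoc]
    rw [map_mul, map_mul, map_mul, ← mul_assoc, hp, mul_assoc, hX, mul_assoc]

lemma evalWeight_mul (h : IsDownUpPair α β φ u d) (g : WeightRing R) :
    h.evalWeight g * u = u * h.evalWeight (shift α β φ g) := by
  induction g using MvPolynomial.induction_on with
  | C r => rw [← algebraMap_eq, AlgHom.commutes, AlgHom.commutes, AlgHom.commutes,
      Algebra.commutes]
  | add p q hp hq => simp only [map_add, mul_add, add_mul, hp, hq]
  | mul_X p j hp =>
    have hX : ∀ j, h.evalWeight (X j) * u = u * h.evalWeight (shift α β φ (X j)) := by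
      refine Fin.forall_fin_two.2 ⟨?_, ?_⟩
      · rw [evalWeight_shift_X_zero, evalWeight_X_zero, h.duu]
        simp only [mul_add, mul_smul_comm, mul_assoc, Algebra.smul_def φ, Algebra.commutes φ]
      · simp [mul_assoc]
    rw [map_mul, map_mul, map_mul, mul_assoc, hX, ← mul_assoc, hp, mul_assoc]

lemma evalWeight_mul_pow (h : IsDownUpPair α β φ u d) (g : WeightRing R) (i : ℕ) :
    h.evalWeight g * u ^ i = u ^ i * h.evalWeight ((shift α β φ ^ i) g) := by
  induction i with
  | zero => simp
  | succ i ih =>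
    rw [pow_succ, ← mul_assoc, ih, mul_assoc, evalWeight_mul, ← mul_assoc, pow_succ',
      AlgHom.mul_apply]

end IsDownUpPair

end DownUpPair

section Weights

variable {R : Type*} [CommRing R] (α β φ : R)

/-- The weight `σⁱ(x)`, by which `d * u` acts on the words starting with `uⁱ`. -/
noncomputable def duWeight (i : ℕ) : WeightRing R := (shift α β φ ^ i) (X 0)

/-- The weight `σⁱ(y)`, by which `u * d` acts on the words starting with `uⁱ`. -/
noncomputable def udWeight (i : ℕ) : WeightRing R := (shift α β φ ^ i) (X 1)

@[simp]
lemma duWeight_zero : duWeight α β φ 0 = X 0 := rfl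

@[simp]
lemma udWeight_zero : udWeight α β φ 0 = X 1 := rfl

lemma udWeight_succ (i : ℕ) : udWeight α β φ (i + 1) = duWeight α β φ i := by
  rw [udWeight, pow_succ, AlgHom.mul_apply, shift_X_one, duWeight]

lemma shift_duWeight (i : ℕ) : shift α β φ (duWeight α β φ i) = duWeight α β φ (i + 1) := by
  rw [duWeight, duWeight, pow_succ', AlgHom.mul_apply]

lemma duWeight_succ (i : ℕ) :
    duWeight α β φ (i + 1) = α • duWeight α β φ i + β • udWeight α β φ i + C φ := by
  rw [duWeight, pow_succ, AlgHom.mul_apply, shift_X_zero, map_add, map_add, map_smul, map_smul,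
    ← algebraMap_eq, AlgHom.commutes, duWeight, udWeight]

end Weights

section WordModule

variable {R : Type*} [CommRing R] (α β φ : R)

/-- The free module of formal words: `single (i, k) g` stands for `uⁱ g dᵏ`. -/
abbrev FormalWords (R : Type*) [CommRing R] := ℕ × ℕ →₀ WeightRing R

/-- The map `uⁱ g dᵏ ↦ uⁱ y g dᵏ - uⁱ⁺¹ σ(g) dᵏ⁺¹`, whose range consists of the formal words that
must vanish in a down-up algebra. -/
noncomputable def ambiguity : FormalWords R →ₗ[R] FormalWords R :=
  Finsupp.lsum R fun p =>
    Finsupp.lsingle p ∘ₗ LinearMap.mulLeft R (X 1) -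
      Finsupp.lsingle (p.1 + 1, p.2 + 1) ∘ₗ (shift α β φ).toLinearMap

lemma ambiguity_single (i k : ℕ) (g : WeightRing R) :
    ambiguity α β φ (.single (i, k) g) =
      .single (i, k) (X 1 * g) - .single (i + 1, k + 1) (shift α β φ g) := by
  simp [ambiguity]

lemma ambiguity_apply_of_eq_zero (g : FormalWords R) {i k : ℕ} (h : i = 0 ∨ k = 0) :
    ambiguity α β φ g (i, k) = X 1 * g (i, k) := by
  induction g using Finsupp.induction_linear with
  | zero => simp
  | add f g hf hg => simp only [map_add, Finsupp.add_apply, hf, hg, mul_add]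
  | single p g =>
    have hne : (p.1 + 1, p.2 + 1) ≠ (i, k) := by grind
    rw [← Prod.mk.eta (p := p), ambiguity_single, Finsupp.sub_apply, Finsupp.single_eq_of_ne' hne,
      sub_zero]
    by_cases hp : p = (i, k) <;> simp [hp]

lemma ambiguity_apply_succ (g : FormalWords R) (i k : ℕ) :
    ambiguity α β φ g (i + 1, k + 1) = X 1 * g (i + 1, k + 1) - shift α β φ (g (i, k)) := by
  induction g using Finsupp.induction_linear with
  | zero => simp
  | add f g hf hg => simp only [map_add, Finsupp.add_apply, hf, hg]; ring
  | single p g =>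
    rw [← Prod.mk.eta (p := p), ambiguity_single]
    simp only [Finsupp.sub_apply, Finsupp.single_apply, Prod.mk.injEq, Nat.add_right_cancel_iff]
    split_ifs <;> simp

lemma C_dvd_apply_of_C_dvd_ambiguity {c : R} {g : FormalWords R}
    (h : ∀ p, C c ∣ ambiguity α β φ g p) (i k : ℕ) : C c ∣ g (i, k) := by
  induction i generalizing k with
  | zero =>
    refine C_dvd_of_C_dvd_X_mul (j := 1) ?_
    simpa only [ambiguity_apply_of_eq_zero α β φ g (.inl rfl)] using h (0, k)
  | succ i ih =>
    refine C_dvd_of_C_dvd_X_mul (j := 1) ?_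
    cases k with
    | zero => simpa only [ambiguity_apply_of_eq_zero α β φ g (.inr rfl)] using h (i + 1, 0)
    | succ k =>
      have hshift : C c ∣ shift α β φ (g (i, k)) := by
        simpa only [algHom_C, algebraMap_eq] using map_dvd (shift α β φ) (ih k)
      rw [← sub_add_cancel (X 1 * g (i + 1, k + 1)) (shift α β φ (g (i, k))),
        ← ambiguity_apply_succ]
      exact dvd_add (h (i + 1, k + 1)) hshift

lemma exists_smul_eq_of_forall_C_dvd {c : R} {g : FormalWords R} (h : ∀ p, C c ∣ g p) :
    ∃ g', c • g' = g := by
  suffices g ∈ (LinearMap.lsmul R (FormalWords R) c).range from this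
  rw [← Finsupp.sum_single g]
  refine Submodule.sum_mem _ fun p _ => ?_
  obtain ⟨b, hb⟩ := h p
  exact ⟨.single p b, by simp [hb, smul_eq_C_mul]⟩

/-- The module of formal words modulo their ambiguities. It turns out to be the left regular module
of the universal down-up algebra. -/
abbrev WordModule := FormalWords R ⧸ LinearMap.range (ambiguity α β φ)

instance WordModule.isTorsionFree : Module.IsTorsionFree R (WordModule α β φ) where
  isSMulRegular c hc := by
    refine .of_right_eq_zero_of_smul fun m hm => ?_
    obtain ⟨p, rfl⟩ := Submodule.mkQ_surjective _ m
    obtain ⟨g, hg⟩ : c • p ∈ LinearMap.range (ambiguity α β φ) := by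
      rwa [← map_smul, Submodule.mkQ_apply, Submodule.Quotient.mk_eq_zero] at hm
    have hdvd : ∀ q, C c ∣ ambiguity α β φ g q := fun q => by
      simp [hg, smul_eq_C_mul]
    obtain ⟨g', rfl⟩ := exists_smul_eq_of_forall_C_dvd fun q =>
      C_dvd_apply_of_C_dvd_ambiguity α β φ hdvd q.1 q.2
    rw [map_smul] at hg
    rw [Submodule.mkQ_apply, Submodule.Quotient.mk_eq_zero]
    exact ⟨g', hc.isSMulRegular hg⟩

/-- The class of the word `uⁱ g dᵏ`. -/
noncomputable def word (i k : ℕ) : WeightRing R →ₗ[R] WordModule α β φ :=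
  Submodule.mkQ _ ∘ₗ Finsupp.lsingle (i, k)

variable {α β φ} in
lemma wordModule_hom_ext {M : Type*} [AddCommGroup M] [Module R M]
    {f f' : WordModule α β φ →ₗ[R] M}
    (h : ∀ i k g, f (word α β φ i k g) = f' (word α β φ i k g)) : f = f' :=
  Submodule.linearMap_qext _ <| Finsupp.lhom_ext' fun p => LinearMap.ext fun g => h p.1 p.2 g

lemma word_X_one_mul (i k : ℕ) (g : WeightRing R) :
    word α β φ i k (X 1 * g) = word α β φ (i + 1) (k + 1) (shift α β φ g) :=
  (Submodule.Quotient.eq _).2 ⟨.single (i, k) g, ambiguity_single α β φ i k g⟩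

/-- Left multiplication by `u` on formal words. -/
noncomputable def formalUp : FormalWords R →ₗ[R] FormalWords R :=
  Finsupp.lmapDomain _ R fun p => (p.1 + 1, p.2)

/-- Left multiplication by `d` on formal words: `d uⁱ⁺¹ g dᵏ = uⁱ σⁱ(x) g dᵏ` and
`d g dᵏ = σ(g) dᵏ⁺¹`. -/
noncomputable def formalDown : FormalWords R →ₗ[R] FormalWords R :=
  Finsupp.lsum R fun
    | (0, k) => Finsupp.lsingle (0, k + 1) ∘ₗ (shift α β φ).toLinearMap
    | (i + 1, k) => Finsupp.lsingle (i, k) ∘ₗ LinearMap.mulLeft R (duWeight α β φ i)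

lemma formalUp_single (p : ℕ × ℕ) (g : WeightRing R) :
    formalUp (.single p g) = .single (p.1 + 1, p.2) g := by
  simp [formalUp]

lemma formalDown_single_zero (k : ℕ) (g : WeightRing R) :
    formalDown α β φ (.single (0, k) g) = .single (0, k + 1) (shift α β φ g) := by
  simp [formalDown]

lemma formalDown_single_succ (i k : ℕ) (g : WeightRing R) :
    formalDown α β φ (.single (i + 1, k) g) = .single (i, k) (duWeight α β φ i * g) := by
  simp [formalDown]

lemma formalUp_ambiguity (g : FormalWords R) :
    formalUp (ambiguity α β φ g) = ambiguity α β φ (formalUp g) := by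
  induction g using Finsupp.induction_linear with
  | zero => simp
  | add f g hf hg => simp only [map_add, hf, hg]
  | single p g =>
    obtain ⟨i, k⟩ := p
    simp only [ambiguity_single, formalUp_single, map_sub]

lemma formalDown_ambiguity_mem (g : FormalWords R) :
    formalDown α β φ (ambiguity α β φ g) ∈ LinearMap.range (ambiguity α β φ) := by
  induction g using Finsupp.induction_linear with
  | zero => simp
  | add f g hf hg => simpa only [map_add] using add_mem hf hg
  | single p g =>
    obtain ⟨_ | i, k⟩ := p
    · rw [ambiguity_single, map_sub, formalDown_single_zero, formalDown_single_succ, map_mul,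
        shift_X_one, duWeight_zero, sub_self]
      exact zero_mem _
    · refine ⟨.single (i, k) (duWeight α β φ i * g), ?_⟩
      simp only [ambiguity_single, formalDown_single_succ, map_sub, map_mul, shift_duWeight,
        mul_left_comm]

/-- The action of `u` on the word module. -/
noncomputable def up : Module.End R (WordModule α β φ) :=
  Submodule.mapQ _ _ formalUp <| by
    rintro _ ⟨g, rfl⟩
    exact ⟨formalUp g, (formalUp_ambiguity α β φ g).symm⟩

/-- The action of `d` on the word module. -/
noncomputable def down : Module.End R (WordModule α β φ) :=
  Submodule.mapQ _ _ (formalDown α β φ) <| by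
    rintro _ ⟨g, rfl⟩
    exact formalDown_ambiguity_mem α β φ g

lemma up_word (i k : ℕ) (g : WeightRing R) :
    up α β φ (word α β φ i k g) = word α β φ (i + 1) k g := by
  simp [up, word, formalUp_single]

lemma down_word_zero (k : ℕ) (g : WeightRing R) :
    down α β φ (word α β φ 0 k g) = word α β φ 0 (k + 1) (shift α β φ g) := by
  simp [down, word, formalDown_single_zero]

lemma down_word_succ (i k : ℕ) (g : WeightRing R) :
    down α β φ (word α β φ (i + 1) k g) = word α β φ i k (duWeight α β φ i * g) := by
  simp [down, word, formalDown_single_succ]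

lemma down_up_word (i k : ℕ) (g : WeightRing R) :
    down α β φ (up α β φ (word α β φ i k g)) = word α β φ i k (duWeight α β φ i * g) := by
  rw [up_word, down_word_succ]

lemma up_down_word (i k : ℕ) (g : WeightRing R) :
    up α β φ (down α β φ (word α β φ i k g)) = word α β φ i k (udWeight α β φ i * g) := by
  cases i with
  | zero => rw [down_word_zero, up_word, udWeight_zero, word_X_one_mul]
  | succ i => rw [down_word_succ, up_word, udWeight_succ]

lemma word_duWeight_succ_mul (i k : ℕ) (g : WeightRing R) :
    word α β φ i k (duWeight α β φ (i + 1) * g) =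
      α • down α β φ (up α β φ (word α β φ i k g)) +
        β • up α β φ (down α β φ (word α β φ i k g)) + φ • word α β φ i k g := by
  simp only [down_up_word, up_down_word, duWeight_succ, add_mul, smul_mul_assoc, map_add, map_smul,
    ← smul_eq_C_mul]

lemma down_word_duWeight_mul (i k : ℕ) (g : WeightRing R) :
    down α β φ (word α β φ i k (duWeight α β φ i * g)) =
      α • down α β φ (up α β φ (down α β φ (word α β φ i k g))) +
        β • up α β φ (down α β φ (down α β φ (word α β φ i k g))) +
          φ • down α β φ (word α β φ i k g) := by
  cases i with
  | zero =>
    rw [down_word_zero, down_word_zero, map_mul, shift_duWeight, word_duWeight_succ_mul]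
  | succ i =>
    rw [down_word_succ, down_word_succ, mul_left_comm, word_duWeight_succ_mul]

theorem isDownUpPair_up_down : IsDownUpPair α β φ (up α β φ) (down α β φ) where
  ddu := wordModule_hom_ext fun i k g => by
    simpa [down_up_word] using down_word_duWeight_mul α β φ i k g
  duu := wordModule_hom_ext fun i k g => by
    simpa [up_word, down_word_succ] using congrArg (up α β φ) (word_duWeight_succ_mul α β φ i k g)

end WordModule

namespace IsDownUpPair

variable {R E : Type*} [CommRing R] [Ring E] [Algebra R E] {α β φ : R} {u d : E}

/-- Evaluation of formal words at a down-up pair. -/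
noncomputable def evalFormal (h : IsDownUpPair α β φ u d) : FormalWords R →ₗ[R] E :=
  Finsupp.lsum R fun p =>
    LinearMap.mulRight R (d ^ p.2) ∘ₗ LinearMap.mulLeft R (u ^ p.1) ∘ₗ h.evalWeight.toLinearMap

lemma evalFormal_single (h : IsDownUpPair α β φ u d) (i k : ℕ) (g : WeightRing R) :
    h.evalFormal (.single (i, k) g) = u ^ i * h.evalWeight g * d ^ k := by
  simp [evalFormal]

lemma evalFormal_ambiguity (h : IsDownUpPair α β φ u d) (g : FormalWords R) :
    h.evalFormal (ambiguity α β φ g) = 0 := by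
  induction g using Finsupp.induction_linear with
  | zero => simp
  | add f g hf hg => rw [map_add, map_add, hf, hg, add_zero]
  | single p g =>
    rw [← Prod.mk.eta (p := p), ambiguity_single, map_sub, evalFormal_single, evalFormal_single,
      sub_eq_zero]
    calc u ^ p.1 * h.evalWeight (X 1 * g) * d ^ p.2
        = u ^ (p.1 + 1) * (d * h.evalWeight g) * d ^ p.2 := by
          simp only [map_mul, evalWeight_X_one, pow_succ, mul_assoc]
      _ = u ^ (p.1 + 1) * h.evalWeight (shift α β φ g) * d ^ (p.2 + 1) := by
          simp only [mul_evalWeight, pow_succ' d, mul_assoc]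

/-- Evaluation of the word module at a down-up pair. -/
noncomputable def evalWord (h : IsDownUpPair α β φ u d) : WordModule α β φ →ₗ[R] E :=
  Submodule.liftQ _ h.evalFormal <| by
    rintro _ ⟨g, rfl⟩
    exact h.evalFormal_ambiguity g

lemma evalWord_word (h : IsDownUpPair α β φ u d) (i k : ℕ) (g : WeightRing R) :
    h.evalWord (word α β φ i k g) = u ^ i * h.evalWeight g * d ^ k := by
  simp [evalWord, word, evalFormal_single]

lemma evalWord_word_one (h : IsDownUpPair α β φ u d) : h.evalWord (word α β φ 0 0 1) = 1 := by
  simp [evalWord_word]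

lemma evalWord_up (h : IsDownUpPair α β φ u d) (m : WordModule α β φ) :
    h.evalWord (up α β φ m) = u * h.evalWord m := by
  suffices h.evalWord ∘ₗ up α β φ = LinearMap.mulLeft R u ∘ₗ h.evalWord from
    LinearMap.congr_fun this m
  refine wordModule_hom_ext fun i k g => ?_
  simp only [LinearMap.comp_apply, LinearMap.mulLeft_apply, up_word, evalWord_word, pow_succ',
    mul_assoc]

lemma evalWord_down (h : IsDownUpPair α β φ u d) (m : WordModule α β φ) :
    h.evalWord (down α β φ m) = d * h.evalWord m := by
  suffices h.evalWord ∘ₗ down α β φ = LinearMap.mulLeft R d ∘ₗ h.evalWord from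
    LinearMap.congr_fun this m
  refine wordModule_hom_ext fun i k g => ?_
  simp only [LinearMap.comp_apply, LinearMap.mulLeft_apply]
  cases i with
  | zero =>
    simp only [down_word_zero, evalWord_word, pow_zero, one_mul, ← mul_assoc, mul_evalWeight,
      pow_succ']
  | succ i =>
    calc h.evalWord (down α β φ (word α β φ (i + 1) k g))
        = u ^ i * h.evalWeight (duWeight α β φ i) * h.evalWeight g * d ^ k := by
          rw [down_word_succ, evalWord_word, map_mul, ← mul_assoc (u ^ i)]
      _ = d * u * u ^ i * h.evalWeight g * d ^ k := by
          rw [duWeight, ← evalWeight_mul_pow, evalWeight_X_zero]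
      _ = d * h.evalWord (word α β φ (i + 1) k g) := by
          simp only [evalWord_word, pow_succ', mul_assoc]

lemma evalWord_apply_of_mem_adjoin (h : IsDownUpPair α β φ u d)
    (ρ : E →ₐ[R] Module.End R (WordModule α β φ)) (hu : ρ u = up α β φ) (hd : ρ d = down α β φ)
    {a : E} (ha : a ∈ Algebra.adjoin R {u, d}) (m : WordModule α β φ) :
    h.evalWord (ρ a m) = a * h.evalWord m := by
  induction ha using Algebra.adjoin_induction generalizing m with
  | mem a ha =>
    obtain rfl | rfl := ha
    · rw [hu, evalWord_up]
    · rw [hd, evalWord_down]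
  | algebraMap r =>
    rw [AlgHom.commutes, Module.algebraMap_end_apply, map_smul, Algebra.smul_def]
  | add a b _ _ iha ihb => rw [map_add, LinearMap.add_apply, map_add, iha, ihb, add_mul]
  | mul a b _ _ iha ihb => rw [map_mul, Module.End.mul_apply, iha, ihb, mul_assoc]

theorem isTorsionFree_of_adjoin_eq_top (h : IsDownUpPair α β φ u d)
    (hgen : Algebra.adjoin R {u, d} = ⊤) (ρ : E →ₐ[R] Module.End R (WordModule α β φ))
    (hu : ρ u = up α β φ) (hd : ρ d = down α β φ) : Module.IsTorsionFree R E := by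
  have hleft : Function.LeftInverse h.evalWord fun a => ρ a (word α β φ 0 0 1) := fun a => by
    have ha : a ∈ Algebra.adjoin R {u, d} := hgen ▸ Algebra.mem_top
    rw [h.evalWord_apply_of_mem_adjoin ρ hu hd ha, evalWord_word_one, mul_one]
  exact hleft.injective.moduleIsTorsionFree _ fun r a => by rw [map_smul, LinearMap.smul_apply]

end IsDownUpPair

section DownUpAlgebra

variable {K : Type} [Field K] {n : ℕ} (α β : K) (φ : MvPolynomial (Fin n) K)

lemma mkAlgHom_apply_eq (a : F K n) :
    RingQuot.mkAlgHom K (Rel α β φ) a = RingQuot.mkAlgHom (MvPolynomial (Fin n) K) (Rel α β φ) a :=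
  DFunLike.congr_fun ((RingQuot.mkAlgHom_coe K _).trans (RingQuot.mkAlgHom_coe _ _).symm) a

lemma T_apply (f : MvPolynomial (Fin n) K) :
    T α β φ f = algebraMap (MvPolynomial (Fin n) K) (A α β φ) f := by
  rw [T, AlgHom.comp_apply, IsScalarTower.toAlgHom_apply, mkAlgHom_apply_eq, AlgHom.commutes]

lemma isDownUpPair_U_D : IsDownUpPair (C α) (C β) φ (U α β φ) (D α β φ) where
  ddu := by
    have h := RingQuot.mkAlgHom_rel K (Rel.ddu (α := α) (β := β) (φ := φ))
    simp only [map_add, map_mul, map_smul] at h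
    rw [← algebraMap_eq, algebraMap_smul, algebraMap_smul, Algebra.smul_def φ, ← T_apply]
    exact h
  duu := by
    have h := RingQuot.mkAlgHom_rel K (Rel.duu (α := α) (β := β) (φ := φ))
    simp only [map_add, map_mul, map_smul] at h
    rw [← algebraMap_eq, algebraMap_smul, algebraMap_smul, Algebra.smul_def φ, Algebra.commutes,
      ← T_apply]
    exact h

lemma adjoin_U_D_eq_top :
    Algebra.adjoin (MvPolynomial (Fin n) K) {U α β φ, D α β φ} = ⊤ := by
  have hsurj := RingQuot.mkAlgHom_surjective (MvPolynomial (Fin n) K) (Rel α β φ)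
  rw [eq_top_iff, ← (AlgHom.range_eq_top _).2 hsurj, ← Algebra.map_top,
    ← FreeAlgebra.adjoin_range_ι, AlgHom.map_adjoin, ← Set.range_comp]
  refine Algebra.adjoin_mono ?_
  rintro _ ⟨_ | _, rfl⟩
  · exact .inl (mkAlgHom_apply_eq α β φ uF).symm
  · exact .inr (mkAlgHom_apply_eq α β φ dF).symm

variable {α β φ} {E : Type*} [Ring E] [Algebra (MvPolynomial (Fin n) K) E] {u d : E}

/-- The homomorphism from `A α β φ` that a down-up pair determines, as in the universal property. -/
noncomputable def lift (h : IsDownUpPair (C α) (C β) φ u d) :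
    A α β φ →ₐ[MvPolynomial (Fin n) K] E :=
  RingQuot.liftAlgHom _ ⟨FreeAlgebra.lift _ fun | .u => u | .d => d, by
    have hsmul (c : K) (a : F K n) : c • a = (C c : MvPolynomial (Fin n) K) • a := by
      rw [← algebraMap_eq, algebraMap_smul]
    rintro _ _ (_ | _)
    · simpa [hsmul, uF, dF, ← Algebra.smul_def] using h.ddu
    · simpa [hsmul, uF, dF, ← Algebra.smul_def, ← Algebra.commutes] using h.duu⟩

@[simp]
lemma lift_U (h : IsDownUpPair (C α) (C β) φ u d) : lift h (U α β φ) = u := by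
  simp [lift, U, uF, mkAlgHom_apply_eq]

@[simp]
lemma lift_D (h : IsDownUpPair (C α) (C β) φ u d) : lift h (D α β φ) = d := by
  simp [lift, D, dF, mkAlgHom_apply_eq]

variable (α β φ)

instance isTorsionFree_A : Module.IsTorsionFree (MvPolynomial (Fin n) K) (A α β φ) :=
  (isDownUpPair_U_D α β φ).isTorsionFree_of_adjoin_eq_top (adjoin_U_D_eq_top α β φ)
    (lift (isDownUpPair_up_down (C α) (C β) φ)) (lift_U _) (lift_D _)

/-- The augmentation `u, d ↦ 0`. -/
noncomputable def augmentation : A α β φ →ₐ[MvPolynomial (Fin n) K] MvPolynomial (Fin n) K :=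
  lift (u := 0) (d := 0) ⟨by simp, by simp⟩

lemma T_injective : Function.Injective (T α β φ) :=
  Function.LeftInverse.injective (g := augmentation α β φ) fun f => by
    rw [T_apply, AlgHom.commutes, Algebra.algebraMap_self_apply]

lemma range_T : (T α β φ).range = Algebra.adjoin K (Set.range fun i => T α β φ (X i)) := by
  rw [← Algebra.map_top, ← adjoin_range_X, AlgHom.map_adjoin, ← Set.range_comp, Function.comp_def]

lemma T_mem_center (f : MvPolynomial (Fin n) K) : T α β φ f ∈ Set.center (A α β φ) := by
  rw [T_apply]
  exact Semigroup.mem_center_iff.2 fun a => (Algebra.commutes f a).symm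

lemma isRegular_T {f : MvPolynomial (Fin n) K} (hf : f ≠ 0) : IsRegular (T α β φ f) := by
  rw [T_apply]
  exact isRegular_algebraMap (.of_ne_zero hf)

end DownUpAlgebra

end DownUp

open DownUp MvPolynomial in
/-- The subalgebra of A(α,β,φ) generated by t₁,…,tₙ is isomorphic to the
polynomial ring K[t₁,…,tₙ] (with tᵢ corresponding to the variable Xᵢ), and every
nonzero polynomial in the tᵢ is a regular central element of A(α,β,φ). -/
theorem downUp_polynomial_subalgebra {K : Type} [Field K] {n : ℕ}
    (α β : K) (φ : MvPolynomial (Fin n) K) :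
    (∃ e : MvPolynomial (Fin n) K ≃ₐ[K]
        Algebra.adjoin K (Set.range (fun i : Fin n => T α β φ (X i))),
      ∀ i : Fin n, (e (X i) : A α β φ) = T α β φ (X i)) ∧
    ∀ f : MvPolynomial (Fin n) K, f ≠ 0 →
      T α β φ f ∈ Set.center (A α β φ) ∧ IsRegular (T α β φ f) := by
  refine ⟨⟨?_, ?_⟩, fun f hf => ⟨T_mem_center α β φ f, isRegular_T α β φ hf⟩⟩
  · exact (AlgEquiv.ofInjective (T α β φ) (T_injective α β φ)).trans
      (Subalgebra.equivOfEq _ _ (range_T α β φ))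
  · exact fun i => rfl
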